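/- arXiv:1901.09578 — 2 statements merged into one kernel-verified Lean document; each statement's English description precedes it below -/
import Mathlib

section
/- (Sandwich formula for the upper model.) Let A ⊆ B ⊆ ∂Δ_n be simplicial complexes. For S ⊆ M(A) let B_S be the set of simplices τ ∈ B such that τ ⊇ σ for some σ ∈ S, let Q_S = ∏_{τ∈B_S} q_τ (with Q_∅ = 1) and Q̃ = ∏_{τ∈∂Δ_n, τ∉B} q_τ. Then the upper-model probability that A ⊆ Y ⊆ B, namely Σ_{Y complex, A⊆Y⊆B} P̄_n(Y), equals Q̃ · Σ_{S⊆M(A)} (−1)^{|S|} Q_S. -/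
open Finset

/-- The full simplex `Δₙ`: all nonempty subsets of `[n] = {0,…,n}`. -/
def simplexAll (n : ℕ) : Finset (Finset (Fin (n+1))) :=
  Finset.univ.filter fun σ => σ.Nonempty

/-- The boundary `∂Δₙ`: all nonempty proper subsets of `[n]`. -/
def bdry (n : ℕ) : Finset (Finset (Fin (n+1))) :=
  Finset.univ.filter fun σ => σ.Nonempty ∧ σ ≠ Finset.univ

/-- A hypergraph is a simplicial complex if it is closed under passing to
nonempty subsets. -/
def IsComplex {n : ℕ} (X : Finset (Finset (Fin (n+1)))) : Prop :=
  ∀ σ ∈ X, ∀ τ : Finset (Fin (n+1)), τ ⊆ σ → τ.Nonempty → τ ∈ X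

instance {n : ℕ} (X : Finset (Finset (Fin (n+1)))) : Decidable (IsComplex X) :=
  inferInstanceAs (Decidable (∀ σ ∈ X, ∀ τ : Finset (Fin (n+1)), τ ⊆ σ → τ.Nonempty → τ ∈ X))

/-- The dual hypergraph `c(X) = {σ̂ : σ ∈ ∂Δₙ, σ ∉ X}`, where `σ̂ = [n] \ σ`. -/
def dual {n : ℕ} (X : Finset (Finset (Fin (n+1)))) : Finset (Finset (Fin (n+1))) :=
  (bdry n \ X).image fun σ => σᶜ

/-- `X̄`: the smallest simplicial complex containing the hypergraph `X`. -/
def clUp {n : ℕ} (X : Finset (Finset (Fin (n+1)))) : Finset (Finset (Fin (n+1))) :=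
  Finset.univ.filter fun τ => τ.Nonempty ∧ ∃ σ ∈ X, τ ⊆ σ

/-- `X̲`: the largest simplicial complex contained in the hypergraph `X`. -/
def clLow {n : ℕ} (X : Finset (Finset (Fin (n+1)))) : Finset (Finset (Fin (n+1))) :=
  Finset.univ.filter fun τ => τ.Nonempty ∧ ∀ σ : Finset (Fin (n+1)), σ ⊆ τ → σ.Nonempty → σ ∈ X

/-- The Bernoulli measure with parameters `p` on hypergraphs contained in the
ambient set `S` of simplices: `P(X) = ∏_{σ∈X} p σ · ∏_{σ∈S\X} (1 - p σ)`. -/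
def bern {n : ℕ} (S : Finset (Finset (Fin (n+1)))) (p : Finset (Fin (n+1)) → ℝ)
    (X : Finset (Finset (Fin (n+1)))) : ℝ :=
  (∏ σ ∈ X, p σ) * ∏ σ ∈ S \ X, (1 - p σ)

/-- The upper measure: `P̄(Y) = Σ_{X ⊆ S, X̄ = Y} P(X)`. -/
def upperP {n : ℕ} (S : Finset (Finset (Fin (n+1)))) (p : Finset (Fin (n+1)) → ℝ)
    (Y : Finset (Finset (Fin (n+1)))) : ℝ :=
  ∑ X ∈ S.powerset.filter (fun X => clUp X = Y), bern S p X

/-- The lower measure: `P̲(Y) = Σ_{X ⊆ S, X̲ = Y} P(X)`. -/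
def lowerP {n : ℕ} (S : Finset (Finset (Fin (n+1)))) (p : Finset (Fin (n+1)) → ℝ)
    (Y : Finset (Finset (Fin (n+1)))) : ℝ :=
  ∑ X ∈ S.powerset.filter (fun X => clLow X = Y), bern S p X

/-- External simplices of `Y` relative to the ambient set `S`: simplices
`σ ∈ S` with `σ ∉ Y` but every nonempty proper subset of `σ` in `Y`. -/
def extSimp {n : ℕ} (S Y : Finset (Finset (Fin (n+1)))) : Finset (Finset (Fin (n+1))) :=
  S.filter fun σ => σ ∉ Y ∧ ∀ τ : Finset (Fin (n+1)), τ ⊂ σ → τ.Nonempty → τ ∈ Y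

/-- Maximal simplices of `Y`: simplices of `Y` not properly contained in another
simplex of `Y`. -/
def maxSimp {n : ℕ} (Y : Finset (Finset (Fin (n+1)))) : Finset (Finset (Fin (n+1))) :=
  Y.filter fun σ => ∀ τ ∈ Y, σ ⊆ τ → σ = τ

/-! Couple the upper model to the Bernoulli hypergraph `X` with `Y = X̄`. Then `Y ⊆ B` says that
`X ⊆ B`, and `A ⊆ Y` says that every maximal simplex of `A` lies in some member of `X`. By
inclusion–exclusion it suffices to know, for each set `T` of maximal simplices of `A`, the
probability that `X ⊆ B` and that no element of `T` lies in a member of `X`. By independence this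
is the product of the `q_τ` over the forbidden simplices: those outside `B` and those in `B_T`. -/

section InclusionExclusion

variable {ι α G : Type*} [AddCommGroup G] (s : Finset ι) (u : Finset α) (P : ι → α → Prop)
  [∀ t : Finset ι, DecidablePred fun a => ∀ i ∈ t, P i a]
  [∀ t : Finset ι, DecidablePred fun a => ∀ i ∈ t, ¬ P i a] (f : α → G)

theorem sum_filter_forall_eq_sum_powerset :
    ∑ a ∈ u with ∀ i ∈ s, P i a, f a =
      ∑ t ∈ s.powerset, (-1) ^ #t • ∑ a ∈ u with ∀ i ∈ t, ¬ P i a, f a := by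
  classical
  have sum_subtype (Q : α → Prop) [DecidablePred Q] :
      ∑ a ∈ u with Q a, f a = ∑ a ∈ univ.filter fun a : u => Q a, f a := by
    rw [sum_filter, sum_filter, ← sum_coe_sort u fun a => if Q a then f a else 0]
  let fails (i : ι) : Finset u := univ.filter fun a => ¬ P i a
  have inf_compl_fails :
      s.inf (fun i => (fails i)ᶜ) = univ.filter fun a : u => ∀ i ∈ s, P i a := by
    ext; simp [fails, mem_inf]
  have inf_fails (t : Finset ι) :
      t.inf fails = univ.filter fun a : u => ∀ i ∈ t, ¬ P i a := by
    ext; simp [fails, mem_inf]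
  simp only [sum_subtype, ← inf_compl_fails, ← inf_fails]
  exact inclusion_exclusion_sum_inf_compl s fails fun a => f a

end InclusionExclusion

section Closure

variable {n : ℕ} {A B X : Finset (Finset (Fin (n + 1)))}

theorem mem_clUp {τ : Finset (Fin (n + 1))} :
    τ ∈ clUp X ↔ τ.Nonempty ∧ ∃ σ ∈ X, τ ⊆ σ :=
  mem_filter_univ τ

theorem isComplex_clUp (X : Finset (Finset (Fin (n + 1)))) : IsComplex (clUp X) := by
  intro σ hσ τ hτσ hτ
  obtain ⟨-, ρ, hρ, hσρ⟩ := mem_clUp.1 hσ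
  exact mem_clUp.2 ⟨hτ, ρ, hρ, hτσ.trans hσρ⟩

theorem subset_clUp_iff (hA : ∅ ∉ A) : A ⊆ clUp X ↔ ∀ σ ∈ A, ∃ τ ∈ X, σ ⊆ τ := by
  have nonempty : ∀ σ ∈ A, σ.Nonempty := fun σ hσ =>
    nonempty_iff_ne_empty.2 (ne_of_mem_of_not_mem hσ hA)
  exact forall₂_congr fun σ hσ => mem_clUp.trans (and_iff_right (nonempty σ hσ))

theorem IsComplex.clUp_subset_iff (hB : IsComplex B) (hX : ∅ ∉ X) : clUp X ⊆ B ↔ X ⊆ B := by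
  have subset_clUp : X ⊆ clUp X := (subset_clUp_iff hX).2 fun σ hσ => ⟨σ, hσ, Subset.rfl⟩
  refine ⟨subset_clUp.trans, fun hXB σ hσ => ?_⟩
  obtain ⟨hσ, ρ, hρ, hσρ⟩ := mem_clUp.1 hσ
  exact hB ρ (hXB hρ) σ hσρ hσ

theorem exists_mem_maxSimp_superset {σ : Finset (Fin (n + 1))} (hσ : σ ∈ A) :
    ∃ μ ∈ maxSimp A, σ ⊆ μ := by
  obtain ⟨μ, hσμ, hμ⟩ := A.exists_le_maximal hσ
  exact ⟨μ, mem_filter.2 ⟨hμ.prop, fun τ hτ hμτ => hμ.eq_of_le hτ hμτ⟩, hσμ⟩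

theorem subset_clUp_iff_forall_mem_maxSimp (hA : ∅ ∉ A) :
    A ⊆ clUp X ↔ ∀ σ ∈ maxSimp A, ∃ τ ∈ X, σ ⊆ τ := by
  rw [subset_clUp_iff hA]
  refine ⟨fun hcov σ hσ => hcov σ (mem_filter.1 hσ).1, fun hcov σ hσ => ?_⟩
  obtain ⟨μ, hμ, hσμ⟩ := exists_mem_maxSimp_superset hσ
  obtain ⟨τ, hτ, hμτ⟩ := hcov μ hμ
  exact ⟨τ, hτ, hσμ.trans hμτ⟩

end Closure

section Bernoulli

variable {n : ℕ} {S B C X : Finset (Finset (Fin (n + 1)))} (p : Finset (Fin (n + 1)) → ℝ)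

theorem sum_bern_powerset_self (S : Finset (Finset (Fin (n + 1)))) :
    ∑ X ∈ S.powerset, bern S p X = 1 := by
  simp only [bern, ← prod_add, add_sub_cancel, prod_const_one]

theorem bern_eq_prod_sdiff_mul_bern (hXC : X ⊆ C) (hCS : C ⊆ S) :
    bern S p X = (∏ τ ∈ S \ C, (1 - p τ)) * bern C p X := by
  have split : ∏ τ ∈ S \ X, (1 - p τ) =
      (∏ τ ∈ S \ C, (1 - p τ)) * ∏ τ ∈ C \ X, (1 - p τ) := by
    rw [← prod_sdiff (sdiff_subset_sdiff hCS (Subset.refl X)), sdiff_sdiff_left,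
      sup_eq_union, union_sdiff_of_subset hXC]
  rw [bern, bern, split, mul_left_comm]

theorem sum_bern_powerset (hCS : C ⊆ S) :
    ∑ X ∈ C.powerset, bern S p X = ∏ τ ∈ S \ C, (1 - p τ) := by
  rw [sum_congr rfl fun X hX => bern_eq_prod_sdiff_mul_bern p (mem_powerset.1 hX) hCS,
    ← mul_sum, sum_bern_powerset_self, mul_one]

theorem sum_bern_powerset_filter_not_exists_superset (hBS : B ⊆ S)
    (T : Finset (Finset (Fin (n + 1)))) :
    ∑ X ∈ B.powerset with ∀ σ ∈ T, ¬ ∃ τ ∈ X, σ ⊆ τ, bern S p X =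
      (∏ τ ∈ S \ B, (1 - p τ)) * ∏ τ ∈ B with ∃ σ ∈ T, σ ⊆ τ, (1 - p τ) := by
  have powerset_sdiff : {X ∈ B.powerset | ∀ σ ∈ T, ¬ ∃ τ ∈ X, σ ⊆ τ} =
      (B \ {τ ∈ B | ∃ σ ∈ T, σ ⊆ τ}).powerset := by
    ext X
    grind
  have above_subset : {τ ∈ B | ∃ σ ∈ T, σ ⊆ τ} ⊆ B := filter_subset _ _
  rw [powerset_sdiff, sum_bern_powerset p (sdiff_subset.trans hBS),
    sdiff_sdiff_eq_sdiff_union (above_subset.trans hBS),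
    prod_union (disjoint_sdiff_self_left.mono_right above_subset)]

theorem sum_upperP (S : Finset (Finset (Fin (n + 1))))
    (F : Finset (Finset (Finset (Fin (n + 1))))) :
    ∑ Y ∈ F, upperP S p Y = ∑ X ∈ S.powerset with clUp X ∈ F, bern S p X :=
  sum_fiberwise_eq_sum_filter S.powerset F clUp (bern S p)

end Bernoulli

theorem sum_upperP_sandwich_eq_sum_bern {n : ℕ} {S A B : Finset (Finset (Fin (n + 1)))}
    (p : Finset (Fin (n + 1)) → ℝ) (hS : ∅ ∉ S) (hA : ∅ ∉ A) (hB : IsComplex B) (hBS : B ⊆ S) :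
    ∑ Y ∈ S.powerset with IsComplex Y ∧ A ⊆ Y ∧ Y ⊆ B, upperP S p Y =
      ∑ X ∈ B.powerset with ∀ σ ∈ maxSimp A, ∃ τ ∈ X, σ ⊆ τ, bern S p X := by
  rw [sum_upperP]
  congr 1
  ext X
  simp only [mem_filter, mem_powerset, isComplex_clUp, true_and,
    subset_clUp_iff_forall_mem_maxSimp hA]
  constructor
  · rintro ⟨hXS, -, hcov, hXB⟩
    exact ⟨(hB.clUp_subset_iff fun h => hS (hXS h)).1 hXB, hcov⟩
  · rintro ⟨hXB, hcov⟩
    have hXS := hXB.trans hBS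
    have hclB := (hB.clUp_subset_iff fun h => hS (hXS h)).2 hXB
    exact ⟨hXS, hclB.trans hBS, hcov, hclB⟩

theorem upper_sandwich_general {n : ℕ} (S : Finset (Finset (Fin (n + 1)))) (hS : ∅ ∉ S)
    (p : Finset (Fin (n + 1)) → ℝ) (A B : Finset (Finset (Fin (n + 1)))) (hA : ∅ ∉ A)
    (hB : IsComplex B) (hBS : B ⊆ S) :
    ∑ Y ∈ S.powerset with IsComplex Y ∧ A ⊆ Y ∧ Y ⊆ B, upperP S p Y =
      (∏ τ ∈ S \ B, (1 - p τ)) *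
        ∑ T ∈ (maxSimp A).powerset,
          (-1 : ℝ) ^ #T * ∏ τ ∈ B with ∃ σ ∈ T, σ ⊆ τ, (1 - p τ) := by
  rw [sum_upperP_sandwich_eq_sum_bern p hS hA hB hBS,
    sum_filter_forall_eq_sum_powerset (maxSimp A) B.powerset fun σ X => ∃ τ ∈ X, σ ⊆ τ, mul_sum]
  refine sum_congr rfl fun T _ => ?_
  rw [sum_bern_powerset_filter_not_exists_superset p hBS, zsmul_eq_mul, mul_left_comm]
  norm_cast

theorem empty_notMem_bdry (n : ℕ) : ∅ ∉ bdry n := by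
  simp [bdry]

/-- Sandwich formula for the upper model: for simplicial complexes
`A ⊆ B ⊆ ∂Δₙ`, the upper-model probability that `A ⊆ Y ⊆ B` equals
`Q̃ · Σ_{S ⊆ M(A)} (-1)^{|S|} Q_S`, where `Q̃ = ∏_{τ∉B} q_τ` and
`Q_S = ∏_{τ∈B_S} q_τ` with `B_S = {τ ∈ B : τ ⊇ σ for some σ ∈ S}`. -/
theorem upper_sandwich (n : ℕ) (hn : 1 ≤ n) (p : Finset (Fin (n+1)) → ℝ)
    (hp : ∀ σ ∈ bdry n, 0 ≤ p σ ∧ p σ ≤ 1)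
    (A B : Finset (Finset (Fin (n+1))))
    (hA : IsComplex A) (hB : IsComplex B) (hAB : A ⊆ B) (hBb : B ⊆ bdry n) :
    ∑ Y ∈ (bdry n).powerset.filter (fun Y => IsComplex Y ∧ A ⊆ Y ∧ Y ⊆ B),
        upperP (bdry n) p Y
    = (∏ τ ∈ bdry n \ B, (1 - p τ)) *
      ∑ S ∈ (maxSimp A).powerset,
        (-1 : ℝ) ^ S.card *
          ∏ τ ∈ B.filter (fun τ => ∃ σ ∈ S, σ ⊆ τ), (1 - p τ) :=
  upper_sandwich_general (bdry n) (empty_notMem_bdry n) p A B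
    (fun h => empty_notMem_bdry n (hBb (hAB h))) hB hBb
end

section
/- Let Y and Y' be independent random simplicial complexes in Δ_n, where Y is distributed by the lower measure with parameters p_σ and Y' by the lower measure with parameters p'_σ. Then the intersection Y ∩ Y' is distributed by the lower measure with parameters p_σ · p'_σ. Equivalently, the pushforward of the product measure P̲_n × P̲'_n under (Y, Y') ↦ Y ∩ Y' is the lower measure with parameters p_σ p'_σ. -/
open Finset

/-!
Keeping a simplex with probability `p σ` and, independently, with probability `p' σ` keeps it with
probability `p σ * p' σ`, so the intersection of two independent Bernoulli hypergraphs is again a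
Bernoulli hypergraph. The map `X ↦ X̲` commutes with intersections, so this passes to the lower
measures, which are the pushforwards of the Bernoulli measures under it.
-/

section BernoulliWeight

variable {α R : Type*} [DecidableEq α] [CommRing R]

/-- The Bernoulli weight of a subset `X ⊆ S` when each `i ∈ S` is chosen independently with
probability `p i`. It is a polynomial expression in `p`, hence makes sense over any commutative
ring; `bern` is the case of hypergraphs and real parameters. -/
def bernoulliWeight (S : Finset α) (p : α → R) (X : Finset α) : R :=
  (∏ i ∈ X, p i) * ∏ i ∈ S \ X, (1 - p i)

variable {S X : Finset α} {a : α}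

theorem bernoulliWeight_insert_left (p : α → R) (ha : a ∉ S) (hX : X ⊆ S) :
    bernoulliWeight (insert a S) p X = (1 - p a) * bernoulliWeight S p X := by
  have haX : a ∉ X := fun h => ha (hX h)
  have haSX : a ∉ S \ X := fun h => ha (mem_sdiff.1 h).1
  rw [bernoulliWeight, bernoulliWeight, insert_sdiff_of_notMem _ haX, prod_insert haSX,
    mul_left_comm]

theorem bernoulliWeight_insert_insert (p : α → R) (ha : a ∉ S) (hX : X ⊆ S) :
    bernoulliWeight (insert a S) p (insert a X) = p a * bernoulliWeight S p X := by
  have haX : a ∉ X := fun h => ha (hX h)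
  rw [bernoulliWeight, bernoulliWeight, insert_sdiff_insert, sdiff_insert_of_notMem ha,
    prod_insert haX, mul_assoc]

theorem sum_bernoulliWeight_insert_mul (p : α → R) (ha : a ∉ S) (f : Finset α → R) :
    ∑ X ∈ (insert a S).powerset, bernoulliWeight (insert a S) p X * f X =
      ∑ X ∈ S.powerset, bernoulliWeight S p X * ((1 - p a) * f X + p a * f (insert a X)) := by
  rw [sum_powerset_insert ha, ← sum_add_distrib]
  refine sum_congr rfl fun X hX => ?_
  rw [bernoulliWeight_insert_left p ha (mem_powerset.1 hX),
    bernoulliWeight_insert_insert p ha (mem_powerset.1 hX)]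
  ring

theorem sum_bernoulliWeight_mul_sum_inter (S : Finset α) (p p' : α → R) (f : Finset α → R) :
    ∑ X ∈ S.powerset, bernoulliWeight S p X *
        ∑ X' ∈ S.powerset, bernoulliWeight S p' X' * f (X ∩ X') =
      ∑ W ∈ S.powerset, bernoulliWeight S (fun i => p i * p' i) W * f W := by
  induction S using Finset.induction_on generalizing f with
  | empty => simp [bernoulliWeight]
  | insert a S ha ih =>
    rw [sum_bernoulliWeight_insert_mul p ha
        fun X => ∑ X' ∈ (insert a S).powerset, bernoulliWeight (insert a S) p' X' * f (X ∩ X'),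
      sum_bernoulliWeight_insert_mul _ ha, ← ih]
    refine sum_congr rfl fun X hX => congrArg (bernoulliWeight S p X * ·) ?_
    rw [sum_bernoulliWeight_insert_mul p' ha, sum_bernoulliWeight_insert_mul p' ha,
      mul_sum, mul_sum, ← sum_add_distrib]
    refine sum_congr rfl fun X' hX' => ?_
    have haX : a ∉ X := fun h => ha (mem_powerset.1 hX h)
    have haX' : a ∉ X' := fun h => ha (mem_powerset.1 hX' h)
    -- `a` survives in the intersection only if it is chosen both times.
    rw [inter_insert_of_notMem haX, insert_inter_of_notMem haX', ← insert_inter_distrib]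
    ring

end BernoulliWeight

section Lower

variable {n : ℕ} {X : Finset (Finset (Fin (n + 1)))} {τ : Finset (Fin (n + 1))}

theorem mem_clLow : τ ∈ clLow X ↔ τ.Nonempty ∧ ∀ σ ⊆ τ, σ.Nonempty → σ ∈ X := by
  simp only [clLow, mem_filter_univ]

theorem clLow_subset (X : Finset (Finset (Fin (n + 1)))) : clLow X ⊆ X := fun τ hτ =>
  (mem_clLow.1 hτ).2 τ Subset.rfl (mem_clLow.1 hτ).1

theorem isComplex_clLow (X : Finset (Finset (Fin (n + 1)))) : IsComplex (clLow X) :=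
  fun _ hσ _ hτσ hτ => mem_clLow.2 ⟨hτ, fun ρ hρτ => (mem_clLow.1 hσ).2 ρ (hρτ.trans hτσ)⟩

theorem clLow_inter (X X' : Finset (Finset (Fin (n + 1)))) :
    clLow (X ∩ X') = clLow X ∩ clLow X' := by
  ext τ
  simp only [mem_clLow, mem_inter, imp_and, forall_and]
  exact and_and_left

variable (S : Finset (Finset (Fin (n + 1)))) (p p' : Finset (Fin (n + 1)) → ℝ)

theorem lowerP_eq_sum_bern_mul_ite (Z : Finset (Finset (Fin (n + 1)))) :
    lowerP S p Z = ∑ X ∈ S.powerset, bern S p X * if clLow X = Z then 1 else 0 := by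
  simp only [lowerP, sum_filter, mul_ite, mul_one, mul_zero]

theorem sum_lowerP_mul (g : Finset (Finset (Fin (n + 1))) → ℝ) :
    ∑ Y ∈ S.powerset with IsComplex Y, lowerP S p Y * g Y =
      ∑ X ∈ S.powerset, bern S p X * g (clLow X) := by
  have clLow_mem : ∀ X ∈ S.powerset, clLow X ∈ S.powerset.filter IsComplex := fun X hX =>
    mem_filter.2 ⟨mem_powerset.2 ((clLow_subset X).trans (mem_powerset.1 hX)), isComplex_clLow X⟩
  rw [← sum_fiberwise_of_maps_to clLow_mem]
  refine sum_congr rfl fun Y _ => ?_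
  rw [lowerP, sum_mul]
  exact sum_congr rfl fun X hX => by rw [(mem_filter.1 hX).2]

theorem intersection_lower_general (Z : Finset (Finset (Fin (n + 1)))) :
    ∑ Y ∈ S.powerset with IsComplex Y,
        ∑ Y' ∈ (S.powerset.filter fun Y' => IsComplex Y') with Y ∩ Y' = Z,
          lowerP S p Y * lowerP S p' Y' =
      lowerP S (fun σ => p σ * p' σ) Z := by
  let indZ (W : Finset (Finset (Fin (n + 1)))) : ℝ := if W = Z then 1 else 0
  calc
    _ = ∑ Y ∈ S.powerset with IsComplex Y, lowerP S p Y *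
          ∑ Y' ∈ S.powerset with IsComplex Y', lowerP S p' Y' * indZ (Y ∩ Y') := by
      simp only [indZ, mul_sum, mul_ite, mul_one, mul_zero, ← sum_filter]
    _ = ∑ X ∈ S.powerset, bern S p X *
          ∑ X' ∈ S.powerset, bern S p' X' * indZ (clLow (X ∩ X')) := by
      simp only [sum_lowerP_mul S p' fun Y' => indZ (_ ∩ Y'), sum_lowerP_mul S p, clLow_inter]
    _ = ∑ W ∈ S.powerset, bern S (fun σ => p σ * p' σ) W * indZ (clLow W) :=
      sum_bernoulliWeight_mul_sum_inter S p p' fun W => indZ (clLow W)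
    _ = lowerP S (fun σ => p σ * p' σ) Z := (lowerP_eq_sum_bern_mul_ite S _ Z).symm

end Lower

/-- The intersection of two independent lower random simplicial complexes with
parameters `p` and `p'` is a lower random simplicial complex with parameters
`p_σ·p'_σ`: the pushforward of the product measure under `(Y,Y') ↦ Y ∩ Y'` is
the lower measure with these parameters. -/
theorem intersection_lower (n : ℕ) (hn : 1 ≤ n) (p p' : Finset (Fin (n+1)) → ℝ)
    (hp : ∀ σ ∈ simplexAll n, 0 ≤ p σ ∧ p σ ≤ 1)
    (hp' : ∀ σ ∈ simplexAll n, 0 ≤ p' σ ∧ p' σ ≤ 1) :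
    ∀ Z ∈ (simplexAll n).powerset.filter (fun Z => IsComplex Z),
      (∑ Y ∈ (simplexAll n).powerset.filter (fun Y => IsComplex Y),
        ∑ Y' ∈ ((simplexAll n).powerset.filter
            (fun Y' => IsComplex Y')).filter (fun Y' => Y ∩ Y' = Z),
          lowerP (simplexAll n) p Y * lowerP (simplexAll n) p' Y')
      = lowerP (simplexAll n) (fun σ => p σ * p' σ) Z :=
  fun Z _ => intersection_lower_general (simplexAll n) p p' Z
end
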